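/- For the linear time-invariant system ȧ = La + Bf, y = Ca + Df with L Hurwitz: for every τ > 0, every continuous input f : [0,∞) → ℝⁿ, and every continuously differentiable solution a : [0,τ] → ℝⁿ with a(0) = a₀, the truncated output y_τ satisfies ‖y_τ‖_{L∞} ≤ γ_cor‖f_τ‖_{L∞} + β_cor, where γ_cor = ‖D‖₂ + 2λmax²(P_cor)‖B‖₂‖C‖₂/λmin(P_cor) and β_cor = ‖C‖₂‖a₀‖√(λmax(P_cor)/λmin(P_cor)), P_cor being the symmetric positive definite solution of the Lyapunov equation P_cor L + Lᵀ P_cor = −I. -/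

import Mathlib

/-!
The bound comes from the Lyapunov function `V(t) = a(t)ᵀ P a(t)`, where `P = Pcor`. Write
`M = lamMax P`, `m = lamMin P`, `b = specNorm B` and `F = ‖f_τ‖_{L∞}`. Along a solution the
Lyapunov equation gives `V' = -‖a‖² + 2 aᵀ P B f` (`hasDerivWithinAt_lyapunov`). Since `V ≤ M ‖a‖²`,
and `aᵀ P B f ≤ √V √M b F` by Cauchy-Schwarz for the form `P` (`quadForm_cauchySchwarz`), this yields
`V' ≤ -V / M + 2 √V √M b F`. The right-hand side is negative as soon as `√V > 2 M √M b F`, so `V`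
can never rise above `(√V(0) + 2 M √M b F)²` (`lyapunov_le`): it would have to cross a level at which
it is strictly decreasing. Combined with `m ‖a‖² ≤ V` and `m ≤ M` this is
`‖a(t)‖ ≤ √(M / m) ‖a₀‖ + (2 M² / m) b F`, and `‖C a + D f‖ ≤ ‖C‖ ‖a‖ + ‖D‖ ‖f‖` finishes the proof.

The suprema and infima in the definitions are over continuous images of the unit sphere, hence over
compact sets, which makes them genuine bounds.
-/

noncomputable section

open Matrix Set MeasureTheory

/-- Euclidean norm on `Fin n → ℝ`. -/
def eNorm {n : ℕ} (a : Fin n → ℝ) : ℝ := Real.sqrt (∑ i, a i ^ 2)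

/-- Truncation of a signal: equals `g` on `(-∞, τ]` (in particular on `[0, τ]`) and `0` for `t > τ`. -/
def trunc {E : Type*} [Zero E] (τ : ℝ) (g : ℝ → E) : ℝ → E := fun t => if t ≤ τ then g t else 0

/-- The `L∞` norm of a vector-valued signal on `[0, ∞)`: `sup_{t ≥ 0} ‖g t‖`. -/
def eLinf {n : ℕ} (g : ℝ → Fin n → ℝ) : ℝ := ⨆ t : Set.Ici (0:ℝ), eNorm (g t.1)

/-- The `Lp` norm of a vector-valued signal on `[0, ∞)`: `(∫₀^∞ ‖g t‖^p dt)^(1/p)`. -/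
def eLp {n : ℕ} (p : ℝ) (g : ℝ → Fin n → ℝ) : ℝ :=
  (∫ t in Set.Ioi (0:ℝ), eNorm (g t) ^ p) ^ (1/p)

/-- Smallest eigenvalue of a symmetric matrix, via its Rayleigh quotient characterization. -/
def lamMin {n : ℕ} (P : Matrix (Fin n) (Fin n) ℝ) : ℝ :=
  sInf {r | ∃ a : Fin n → ℝ, eNorm a = 1 ∧ r = a ⬝ᵥ P.mulVec a}

/-- Largest eigenvalue of a symmetric matrix, via its Rayleigh quotient characterization. -/
def lamMax {n : ℕ} (P : Matrix (Fin n) (Fin n) ℝ) : ℝ :=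
  sSup {r | ∃ a : Fin n → ℝ, eNorm a = 1 ∧ r = a ⬝ᵥ P.mulVec a}

/-- Spectral norm of a matrix: the induced Euclidean operator norm. -/
def specNorm {n : ℕ} (M : Matrix (Fin n) (Fin n) ℝ) : ℝ :=
  sSup {r | ∃ a : Fin n → ℝ, eNorm a = 1 ∧ r = eNorm (M.mulVec a)}

/-! ### Euclidean norm, extreme Rayleigh quotients and the spectral norm -/

lemma eNorm_eq_norm {n : ℕ} (a : Fin n → ℝ) : eNorm a = ‖WithLp.toLp 2 a‖ := by
  simp [eNorm, EuclideanSpace.norm_eq]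

lemma eNorm_nonneg {n : ℕ} (a : Fin n → ℝ) : 0 ≤ eNorm a := Real.sqrt_nonneg _

lemma eNorm_add_le {n : ℕ} (a b : Fin n → ℝ) : eNorm (a + b) ≤ eNorm a + eNorm b := by
  simp only [eNorm_eq_norm, WithLp.toLp_add]
  exact norm_add_le _ _

lemma eNorm_smul {n : ℕ} (c : ℝ) (a : Fin n → ℝ) : eNorm (c • a) = |c| * eNorm a := by
  simp only [eNorm_eq_norm, WithLp.toLp_smul, norm_smul, Real.norm_eq_abs]

lemma eNorm_eq_zero {n : ℕ} {a : Fin n → ℝ} : eNorm a = 0 ↔ a = 0 := by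
  rw [eNorm_eq_norm, norm_eq_zero, WithLp.toLp_eq_zero]

lemma eNorm_zero {n : ℕ} : eNorm (0 : Fin n → ℝ) = 0 := eNorm_eq_zero.2 rfl

lemma dotProduct_self_eq {n : ℕ} (a : Fin n → ℝ) : a ⬝ᵥ a = eNorm a ^ 2 := by
  rw [eNorm, Real.sq_sqrt (Finset.sum_nonneg fun i _ => sq_nonneg _)]
  simp [dotProduct, sq]

lemma continuous_eNorm {n : ℕ} : Continuous (eNorm : (Fin n → ℝ) → ℝ) := by
  unfold eNorm
  fun_prop

lemma isCompact_eNorm_sphere (n : ℕ) : IsCompact {a : Fin n → ℝ | eNorm a = 1} := by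
  refine Metric.isCompact_of_isClosed_isBounded
    (isClosed_eq continuous_eNorm continuous_const) ?_
  refine (Metric.isBounded_closedBall (x := (0 : Fin n → ℝ)) (r := 1)).subset fun a ha => ?_
  rw [mem_closedBall_zero_iff, pi_norm_le_iff_of_nonneg zero_le_one]
  intro i
  have h := PiLp.norm_apply_le (WithLp.toLp 2 a) i
  rw [← eNorm_eq_norm, show eNorm a = 1 from ha] at h
  exact h

lemma isCompact_sphere_values {n : ℕ} {g : (Fin n → ℝ) → ℝ} (hg : Continuous g) :
    IsCompact {r | ∃ a : Fin n → ℝ, eNorm a = 1 ∧ r = g a} := by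
  have h := (isCompact_eNorm_sphere n).image hg
  convert h using 1
  ext r
  simp [Set.mem_image, eq_comm]

lemma continuous_quadForm {n : ℕ} (P : Matrix (Fin n) (Fin n) ℝ) :
    Continuous fun a : Fin n → ℝ => a ⬝ᵥ P.mulVec a := by
  fun_prop

lemma eNorm_normalize {n : ℕ} {a : Fin n → ℝ} (ha : a ≠ 0) :
    eNorm ((eNorm a)⁻¹ • a) = 1 := by
  have h : eNorm a ≠ 0 := fun h => ha (eNorm_eq_zero.1 h)
  rw [eNorm_smul, abs_of_nonneg (inv_nonneg.2 (eNorm_nonneg a)), inv_mul_cancel₀ h]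

lemma quadForm_normalize {n : ℕ} (P : Matrix (Fin n) (Fin n) ℝ) (a : Fin n → ℝ) :
    ((eNorm a)⁻¹ • a) ⬝ᵥ P.mulVec ((eNorm a)⁻¹ • a) = (a ⬝ᵥ P.mulVec a) / eNorm a ^ 2 := by
  simp only [mulVec_smul, smul_dotProduct, dotProduct_smul, smul_eq_mul]
  rw [div_eq_mul_inv, ← inv_pow]
  ring

lemma quadForm_le_lamMax {n : ℕ} (P : Matrix (Fin n) (Fin n) ℝ) (a : Fin n → ℝ) :
    a ⬝ᵥ P.mulVec a ≤ lamMax P * eNorm a ^ 2 := by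
  by_cases ha : a = 0
  · simp [ha, eNorm_zero]
  · have hpos : 0 < eNorm a := (eNorm_nonneg a).lt_of_ne fun h => ha (eNorm_eq_zero.1 h.symm)
    have h : _ ≤ lamMax P := le_csSup (isCompact_sphere_values (continuous_quadForm P)).bddAbove
      ⟨_, eNorm_normalize ha, rfl⟩
    rwa [quadForm_normalize, div_le_iff₀ (by positivity)] at h

lemma lamMin_le_quadForm {n : ℕ} (P : Matrix (Fin n) (Fin n) ℝ) (a : Fin n → ℝ) :
    lamMin P * eNorm a ^ 2 ≤ a ⬝ᵥ P.mulVec a := by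
  by_cases ha : a = 0
  · simp [ha, eNorm_zero]
  · have hpos : 0 < eNorm a := (eNorm_nonneg a).lt_of_ne fun h => ha (eNorm_eq_zero.1 h.symm)
    have h : lamMin P ≤ _ := csInf_le (isCompact_sphere_values (continuous_quadForm P)).bddBelow
      ⟨_, eNorm_normalize ha, rfl⟩
    rwa [quadForm_normalize, le_div_iff₀ (by positivity)] at h

lemma eNorm_mulVec_le {n : ℕ} (A : Matrix (Fin n) (Fin n) ℝ) (a : Fin n → ℝ) :
    eNorm (A.mulVec a) ≤ specNorm A * eNorm a := by
  by_cases ha : a = 0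
  · simp [ha, eNorm_zero]
  · have hpos : 0 < eNorm a := (eNorm_nonneg a).lt_of_ne fun h => ha (eNorm_eq_zero.1 h.symm)
    have hc : Continuous fun x : Fin n → ℝ => eNorm (A.mulVec x) :=
      continuous_eNorm.comp (by fun_prop)
    have h : _ ≤ specNorm A := le_csSup (isCompact_sphere_values hc).bddAbove
      ⟨_, eNorm_normalize ha, rfl⟩
    rwa [mulVec_smul, eNorm_smul, abs_of_nonneg (inv_nonneg.2 hpos.le), inv_mul_le_iff₀ hpos,
      mul_comm] at h

lemma specNorm_nonneg {n : ℕ} (A : Matrix (Fin n) (Fin n) ℝ) : 0 ≤ specNorm A := by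
  refine Real.sSup_nonneg ?_
  rintro r ⟨a, -, rfl⟩
  exact eNorm_nonneg _

lemma quadForm_nonneg {n : ℕ} {P : Matrix (Fin n) (Fin n) ℝ} (hP : P.PosDef) (a : Fin n → ℝ) :
    0 ≤ a ⬝ᵥ P.mulVec a := by
  simpa using hP.posSemidef.dotProduct_mulVec_nonneg a

lemma lamMin_nonneg {n : ℕ} {P : Matrix (Fin n) (Fin n) ℝ} (hP : P.PosDef) : 0 ≤ lamMin P := by
  refine Real.sInf_nonneg ?_
  rintro r ⟨a, -, rfl⟩
  exact quadForm_nonneg hP a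

/-- Strict positivity holds because the infimum is attained on the unit sphere, which is nonempty
only in positive dimension. -/
lemma lamMin_pos {n : ℕ} [NeZero n] {P : Matrix (Fin n) (Fin n) ℝ} (hP : P.PosDef) :
    0 < lamMin P := by
  have h1 : (fun _ => 1 : Fin n → ℝ) ≠ 0 := fun h => one_ne_zero (congrFun h 0)
  obtain ⟨a, ha, h⟩ := (isCompact_sphere_values (continuous_quadForm P)).sInf_mem
    ⟨_, _, eNorm_normalize h1, rfl⟩
  have ha0 : a ≠ 0 := by
    rintro rfl
    simp [eNorm_zero] at ha
  rw [lamMin, h]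
  simpa using hP.dotProduct_mulVec_pos ha0

lemma lamMin_le_lamMax {n : ℕ} [NeZero n] (P : Matrix (Fin n) (Fin n) ℝ) :
    lamMin P ≤ lamMax P := by
  have h1 : (fun _ => 1 : Fin n → ℝ) ≠ 0 := fun h => one_ne_zero (congrFun h 0)
  have h := (lamMin_le_quadForm P _).trans (quadForm_le_lamMax P
    ((eNorm (fun _ => 1 : Fin n → ℝ))⁻¹ • (fun _ => 1 : Fin n → ℝ)))
  rwa [eNorm_normalize h1, one_pow, mul_one, mul_one] at h

/-! ### The Lyapunov function -/

lemma dotProduct_mulVec_comm {n : ℕ} {P : Matrix (Fin n) (Fin n) ℝ} (hPs : Pᵀ = P)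
    (x y : Fin n → ℝ) : x ⬝ᵥ P.mulVec y = y ⬝ᵥ P.mulVec x := by
  rw [dotProduct_mulVec, ← mulVec_transpose, hPs, dotProduct_comm]

lemma quadForm_cauchySchwarz {n : ℕ} {P : Matrix (Fin n) (Fin n) ℝ} (hPs : Pᵀ = P)
    (hP : P.PosDef) (x y : Fin n → ℝ) :
    (x ⬝ᵥ P.mulVec y) ^ 2 ≤ (x ⬝ᵥ P.mulVec x) * (y ⬝ᵥ P.mulVec y) := by
  have h : ∀ s : ℝ, 0 ≤ (y ⬝ᵥ P.mulVec y) * (s * s) + (2 * (x ⬝ᵥ P.mulVec y)) * s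
      + x ⬝ᵥ P.mulVec x := by
    intro s
    have h := quadForm_nonneg hP (x + s • y)
    simp only [mulVec_add, mulVec_smul, add_dotProduct, dotProduct_add, smul_dotProduct,
      dotProduct_smul, smul_eq_mul, dotProduct_mulVec_comm hPs y x] at h
    linarith
  have := discrim_le_zero h
  rw [discrim] at this
  linarith

lemma hasDerivWithinAt_lyapunov {n : ℕ} {L P : Matrix (Fin n) (Fin n) ℝ} (hPs : Pᵀ = P)
    (hLyap : P * L + Lᵀ * P = -(1 : Matrix (Fin n) (Fin n) ℝ))
    {a : ℝ → Fin n → ℝ} {u : Fin n → ℝ} {s : Set ℝ} {t : ℝ}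
    (ha : HasDerivWithinAt a (L.mulVec (a t) + u) s t) :
    HasDerivWithinAt (fun t => a t ⬝ᵥ P.mulVec (a t))
      (-eNorm (a t) ^ 2 + 2 * (a t ⬝ᵥ P.mulVec u)) s t := by
  have hP : HasDerivWithinAt (fun t => P.mulVec (a t)) (P.mulVec (L.mulVec (a t) + u)) s t :=
    ((mulVecLin P).toContinuousLinearMap.hasFDerivAt.comp_hasDerivWithinAt t ha)
  have hV : HasDerivWithinAt (fun t => a t ⬝ᵥ P.mulVec (a t))
      ((L.mulVec (a t) + u) ⬝ᵥ P.mulVec (a t) + a t ⬝ᵥ P.mulVec (L.mulVec (a t) + u)) s t := by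
    simp only [dotProduct, ← Finset.sum_add_distrib]
    exact HasDerivWithinAt.fun_sum fun i _ =>
      (hasDerivWithinAt_pi.1 ha i).fun_mul (hasDerivWithinAt_pi.1 hP i)
  convert hV using 1
  have h := congrArg (fun A => a t ⬝ᵥ A.mulVec (a t)) hLyap
  simp only [add_mulVec, ← mulVec_mulVec, dotProduct_add, neg_mulVec, one_mulVec, dotProduct_neg,
    dotProduct_self_eq] at h
  have h2 : a t ⬝ᵥ Lᵀ.mulVec (P.mulVec (a t)) = L.mulVec (a t) ⬝ᵥ P.mulVec (a t) := by
    rw [dotProduct_mulVec, vecMul_transpose]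
  rw [mulVec_add, dotProduct_add, add_dotProduct, dotProduct_mulVec_comm hPs u]
  linarith

/-- Invariance of the sublevel sets of `V = aᵀ P a`: on the boundary of a level `c² > K²` the
function `V` is strictly decreasing, so it cannot exceed `K²`. -/
lemma lyapunov_le {n : ℕ} {L P : Matrix (Fin n) (Fin n) ℝ} (hPs : Pᵀ = P) (hP : P.PosDef)
    (hLyap : P * L + Lᵀ * P = -(1 : Matrix (Fin n) (Fin n) ℝ)) (hM : 0 < lamMax P)
    {τ U K : ℝ} {a u : ℝ → Fin n → ℝ} (hU : 0 ≤ U)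
    (ha : ∀ t ∈ Icc (0 : ℝ) τ, HasDerivWithinAt a (L.mulVec (a t) + u t) (Icc (0 : ℝ) τ) t)
    (hu : ∀ t ∈ Icc (0 : ℝ) τ, eNorm (u t) ≤ U)
    (hK0 : √(a 0 ⬝ᵥ P.mulVec (a 0)) ≤ K) (hK : 2 * lamMax P * √(lamMax P) * U ≤ K)
    {t : ℝ} (ht : t ∈ Icc (0 : ℝ) τ) :
    √(a t ⬝ᵥ P.mulVec (a t)) ≤ K := by
  refine le_of_forall_gt fun c hc => ?_
  have hKnn : 0 ≤ K := (Real.sqrt_nonneg _).trans hK0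
  obtain ⟨c', hKc', hc'c⟩ := exists_between hc
  refine lt_of_le_of_lt ?_ hc'c
  have hc' : 0 < c' := hKnn.trans_lt hKc'
  refine Real.sqrt_le_iff.2 ⟨hc'.le, ?_⟩
  have hd : ∀ t ∈ Icc (0 : ℝ) τ, _ := fun t ht => hasDerivWithinAt_lyapunov hPs hLyap (ha t ht)
  refine image_le_of_deriv_right_lt_deriv_boundary
    (f := fun t => a t ⬝ᵥ P.mulVec (a t)) (B := fun _ => c' ^ 2) (B' := fun _ => 0)
    (fun t ht => (hd t ht).continuousWithinAt)
    (fun t ht => (hd t ⟨ht.1, ht.2.le⟩).mono_of_mem_nhdsWithin (Icc_mem_nhdsGE_of_mem ht))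
    ?_ (fun t => hasDerivAt_const t _) ?_ ht
  · exact (Real.sqrt_le_iff.1 (hK0.trans hKc'.le)).2
  · intro t ht hV
    have hV' : a t ⬝ᵥ P.mulVec (a t) = c' ^ 2 := hV
    have h1 := quadForm_le_lamMax P (a t)
    have hcs := quadForm_cauchySchwarz hPs hP (a t) (u t)
    have h2 : u t ⬝ᵥ P.mulVec (u t) ≤ (√(lamMax P) * U) ^ 2 := by
      refine (quadForm_le_lamMax P (u t)).trans ?_
      rw [mul_pow, Real.sq_sqrt hM.le]
      have := eNorm_nonneg (u t)
      have := hu t ⟨ht.1, ht.2.le⟩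
      gcongr
    have h3 : a t ⬝ᵥ P.mulVec (u t) ≤ c' * (√(lamMax P) * U) := by
      refine le_of_sq_le_sq ?_ (by positivity)
      rw [mul_pow]
      refine hcs.trans ?_
      rw [hV']
      gcongr
    rw [hV'] at h1
    have h4 : 2 * lamMax P * √(lamMax P) * U * c' < c' * c' := by
      have := hK.trans_lt hKc'
      gcongr
    have h5 : lamMax P * (-eNorm (a t) ^ 2 + 2 * (a t ⬝ᵥ P.mulVec (u t))) < 0 := by
      have := mul_le_mul_of_nonneg_left h3 hM.le
      linarith
    exact neg_of_mul_neg_right h5 hM.le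

/-! ### Bounds for the input and the state -/

/-- Continuity of `f` on the compact interval `[0, τ]` makes the supremum defining the truncated
norm finite, hence an upper bound for the pointwise norms. -/
lemma eNorm_le_eLinf_trunc {n : ℕ} {f : ℝ → Fin n → ℝ} (hf : Continuous f) {τ t : ℝ}
    (ht : t ∈ Icc (0 : ℝ) τ) : eNorm (f t) ≤ eLinf (trunc τ f) := by
  obtain ⟨R, hR⟩ := (isCompact_Icc (a := (0 : ℝ)) (b := τ)).bddAbove_image
    (continuous_eNorm.comp hf).continuousOn
  have hb : BddAbove (range fun t : Set.Ici (0 : ℝ) => eNorm (trunc τ f t.1)) := by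
    refine ⟨max R 0, ?_⟩
    rintro _ ⟨⟨s, hs⟩, rfl⟩
    by_cases h : s ≤ τ
    · simpa [trunc, h] using Or.inl (hR ⟨s, ⟨hs, h⟩, rfl⟩)
    · simp [trunc, h, eNorm_zero]
  simpa [trunc, ht.2, eLinf] using le_ciSup hb ⟨t, ht.1⟩

lemma eLinf_nonneg {n : ℕ} (g : ℝ → Fin n → ℝ) : 0 ≤ eLinf g :=
  Real.iSup_nonneg fun _ => eNorm_nonneg _

lemma eNorm_state_le {n : ℕ} [NeZero n] {L B P : Matrix (Fin n) (Fin n) ℝ} (hPs : Pᵀ = P)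
    (hP : P.PosDef) (hLyap : P * L + Lᵀ * P = -(1 : Matrix (Fin n) (Fin n) ℝ))
    {τ F : ℝ} {a f : ℝ → Fin n → ℝ} (hF : 0 ≤ F)
    (ha : ∀ t ∈ Icc (0 : ℝ) τ,
      HasDerivWithinAt a (L.mulVec (a t) + B.mulVec (f t)) (Icc (0 : ℝ) τ) t)
    (hf : ∀ t ∈ Icc (0 : ℝ) τ, eNorm (f t) ≤ F) {t : ℝ} (ht : t ∈ Icc (0 : ℝ) τ) :
    eNorm (a t) ≤ 2 * lamMax P ^ 2 * specNorm B / lamMin P * F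
      + eNorm (a 0) * √(lamMax P / lamMin P) := by
  have hm : 0 < lamMin P := lamMin_pos hP
  have hmM := lamMin_le_lamMax P
  have hM : 0 < lamMax P := hm.trans_le hmM
  have hB := specNorm_nonneg B
  have h0 := eNorm_nonneg (a 0)
  have hV0 : √(a 0 ⬝ᵥ P.mulVec (a 0)) ≤ √(lamMax P) * eNorm (a 0) := by
    refine (Real.sqrt_le_sqrt (quadForm_le_lamMax P (a 0))).trans_eq ?_
    rw [Real.sqrt_mul hM.le, Real.sqrt_sq h0]
  have hVt : √(lamMin P) * eNorm (a t) ≤ √(a t ⬝ᵥ P.mulVec (a t)) := by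
    refine Eq.trans_le ?_ (Real.sqrt_le_sqrt (lamMin_le_quadForm P (a t)))
    rw [Real.sqrt_mul hm.le, Real.sqrt_sq (eNorm_nonneg _)]
  have hK := lyapunov_le (U := specNorm B * F)
    (K := √(lamMax P) * eNorm (a 0) + 2 * lamMax P * √(lamMax P) * (specNorm B * F))
    hPs hP hLyap hM (by positivity) ha
    (fun s hs => (eNorm_mulVec_le B (f s)).trans (mul_le_mul_of_nonneg_left (hf s hs) hB))
    (hV0.trans (le_add_of_nonneg_right (by positivity)))
    (le_add_of_nonneg_left (by positivity)) ht
  rw [Real.sqrt_div hM.le]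
  have hr : 0 < √(lamMin P) := Real.sqrt_pos.2 hm
  have hrs : √(lamMin P) ≤ √(lamMax P) := Real.sqrt_le_sqrt hmM
  have hr2 := Real.sq_sqrt hm.le
  have hs2 := Real.sq_sqrt hM.le
  have h1 : eNorm (a t) ≤ (√(lamMax P) * eNorm (a 0)
      + 2 * lamMax P * √(lamMax P) * (specNorm B * F)) / √(lamMin P) := by
    rw [le_div_iff₀ hr, mul_comm]
    exact hVt.trans hK
  refine h1.trans ?_
  -- The sharper gain `2 M √M / √m` is at most `2 M² / m` because `√m ≤ √M`.
  have h2 : √(lamMax P) / √(lamMin P) ≤ lamMax P / lamMin P := by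
    rw [← Real.sqrt_div hM.le]
    have : 1 ≤ lamMax P / lamMin P := (one_le_div hm).2 hmM
    exact Real.sqrt_le_iff.2 ⟨by positivity, by nlinarith⟩
  calc _ = 2 * lamMax P * (specNorm B * F) * (√(lamMax P) / √(lamMin P))
        + eNorm (a 0) * (√(lamMax P) / √(lamMin P)) := by ring
    _ ≤ 2 * lamMax P * (specNorm B * F) * (lamMax P / lamMin P)
        + eNorm (a 0) * (√(lamMax P) / √(lamMin P)) := by gcongr
    _ = _ := by ring

/-- **Linear finite-gain L∞ bound** (Khalil, Corollary 5.2, case p = ∞):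
for the LTI system ȧ = La + Bf, y = Ca + Df with L Hurwitz, the truncated
output satisfies ‖y_τ‖_{L∞} ≤ γ_cor‖f_τ‖_{L∞} + β_cor, where
γ_cor = ‖D‖₂ + 2λmax²(P_cor)‖B‖₂‖C‖₂/λmin(P_cor) and
β_cor = ‖C‖₂‖a₀‖√(λmax(P_cor)/λmin(P_cor)), with P_cor ≻ 0 symmetric solving
P_cor L + Lᵀ P_cor = −I. -/
theorem linear_Linf_gain
    {n : ℕ} (L B C D : Matrix (Fin n) (Fin n) ℝ)
    (hHurwitz : ∀ z ∈ spectrum ℂ (L.map (algebraMap ℝ ℂ)), z.re < 0)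
    (Pcor : Matrix (Fin n) (Fin n) ℝ) (hPsym : Pcorᵀ = Pcor) (hPpd : Pcor.PosDef)
    (hLyap : Pcor * L + Lᵀ * Pcor = -(1 : Matrix (Fin n) (Fin n) ℝ))
    (τ : ℝ) (hτ : 0 < τ)
    (f : ℝ → Fin n → ℝ) (hfc : Continuous f)
    (a₀ : Fin n → ℝ) (a : ℝ → Fin n → ℝ)
    (hode : ∀ t ∈ Icc (0:ℝ) τ,
      HasDerivWithinAt a (L.mulVec (a t) + B.mulVec (f t)) (Icc (0:ℝ) τ) t)
    (hinit : a 0 = a₀) :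
    eLinf (trunc τ (fun t => C.mulVec (a t) + D.mulVec (f t))) ≤
      (specNorm D + 2 * lamMax Pcor ^ 2 * specNorm B * specNorm C / lamMin Pcor) *
        eLinf (trunc τ f)
      + specNorm C * eNorm a₀ * Real.sqrt (lamMax Pcor / lamMin Pcor) := by
  subst hinit
  have hF := eLinf_nonneg (trunc τ f)
  have hB := specNorm_nonneg B
  have hC := specNorm_nonneg C
  have hD := specNorm_nonneg D
  have hm := lamMin_nonneg hPpd
  have h0 := eNorm_nonneg (a 0)
  have hf : ∀ t ∈ Icc (0 : ℝ) τ, eNorm (f t) ≤ eLinf (trunc τ f) :=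
    fun t ht => eNorm_le_eLinf_trunc hfc ht
  have : Nonempty (Set.Ici (0 : ℝ)) := ⟨⟨0, self_mem_Ici⟩⟩
  refine ciSup_le ?_
  rintro ⟨t, ht0⟩
  by_cases htτ : t ≤ τ
  · have ht : t ∈ Icc (0 : ℝ) τ := ⟨ht0, htτ⟩
    simp only [trunc, htτ, if_true]
    rcases Nat.eq_zero_or_pos n with rfl | hn
    -- In dimension zero all the norms and eigenvalue bounds are `0`, so only signs matter.
    · rw [Subsingleton.elim (_ + _) (0 : Fin 0 → ℝ), eNorm_zero]
      positivity
    · have : NeZero n := ⟨hn.ne'⟩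
      have hat := eNorm_state_le hPsym hPpd hLyap hF hode hf ht
      calc _ ≤ specNorm C * eNorm (a t) + specNorm D * eNorm (f t) :=
            (eNorm_add_le _ _).trans (add_le_add (eNorm_mulVec_le _ _) (eNorm_mulVec_le _ _))
        _ ≤ specNorm C * (2 * lamMax Pcor ^ 2 * specNorm B / lamMin Pcor * eLinf (trunc τ f)
              + eNorm (a 0) * √(lamMax Pcor / lamMin Pcor))
            + specNorm D * eLinf (trunc τ f) := by
          have := hf t ht
          gcongr
        _ = _ := by ring
  · simp only [trunc, htτ, if_false, eNorm_zero]
    positivity
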